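/- Let G be a finite group and d ≥ 1. Let Ψ_d be the set of all group homomorphisms ψ : G → O(d, ℝ), and let Ĝ be the set of characters of the complex irreducible representations of G. Then ⋂_{ψ∈Ψ_d} ker(ψ) = ⋂ { ker(χ) : χ ∈ Ĝ with deg_ℝ(χ) ≤ d }. -/

import Mathlib

open scoped Classical in
/-- The "real degree" `deg_ℝ(χ)` of the character of `V`: the degree of `V` if the
Frobenius–Schur indicator of its character equals `1`, and twice the degree otherwise. -/
noncomputable def realDeg {G : Type} [Group G] [Fintype G] (V : FDRep ℂ G) : ℕ :=
  if (Fintype.card G : ℂ)⁻¹ * ∑ g : G, V.character (g ^ 2) = 1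
  then Module.finrank ℂ V
  else 2 * Module.finrank ℂ V

/-!
Every finite-dimensional representation of a finite group over `ℝ` of dimension at most `d` has the
same kernel as some homomorphism to `O(d, ℝ)`: average an inner product and add a trivial summand.

An irreducible complex `V` contains a nonzero real subrepresentation of real dimension at most
`deg_ℝ V`, and the kernel of any such subrepresentation acts trivially on its complex span, which
is `V`. When the indicator is not `1`, take `V` itself. When it is `1`, averaging gives a nonzero
symmetric invariant bilinear form `B`; with respect to an invariant inner product it is represented
by a conjugate-linear `A` with `⟪A v, w⟫ = B v w`. This `A` is symmetric over `ℝ`, commutes with `G`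
and anticommutes with `i`, so multiplication by `i` exchanges its eigenspaces for `μ` and `-μ`, and
an eigenspace with `μ ≠ 0` has at most half the real dimension of `V`.

Conversely, the complexification of `ψ : G → O(d, ℝ)` is a sum of irreducible `q`, and the standard
bilinear form restricts to each of them. If the restriction is nonzero, the indicator of `q` is `1`
and `deg_ℝ q = dim q ≤ d`. If it vanishes, `q` is isotropic and `deg_ℝ q ≤ 2 dim q ≤ d`. Hence the
common kernel of the characters of real degree at most `d` lies in `ker ψ`.
-/

section FrobeniusSchur

variable {k G V : Type*} [Field k] [Group G] [AddCommGroup V] [Module k V]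

/-- The Frobenius–Schur indicator `|G|⁻¹ ∑ χ(g²)` of the character `χ` of `ρ`. -/
noncomputable def frobeniusSchur [Fintype G] (ρ : Representation k G V) : k :=
  (Fintype.card G : k)⁻¹ * ∑ g, ρ.character (g ^ 2)

/-- The space of `G`-invariant bilinear forms on a representation. -/
def invariantForms (ρ : Representation k G V) : Submodule k (LinearMap.BilinForm k V) where
  carrier := {B | ∀ g v w, B (ρ g v) (ρ g w) = B v w}
  zero_mem' _ _ _ := rfl
  add_mem' hA hB g v w := congrArg₂ (· + ·) (hA g v w) (hB g v w)
  smul_mem' c _ hB g v w := congrArg (c * ·) (hB g v w)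

theorem mem_invariantForms {ρ : Representation k G V} {B : LinearMap.BilinForm k V} :
    B ∈ invariantForms ρ ↔ ∀ g v w, B (ρ g v) (ρ g w) = B v w :=
  Iff.rfl

/-- The pullback of bilinear forms along an endomorphism, as a linear operator. -/
def bilinFormPullback (f : Module.End k V) :
    LinearMap.BilinForm k V →ₗ[k] LinearMap.BilinForm k V where
  toFun B := B.comp f f
  map_add' _ _ := rfl
  map_smul' _ _ := rfl

theorem bilinFormPullback_apply (f : Module.End k V) (B : LinearMap.BilinForm k V) (v w : V) :
    bilinFormPullback f B v w = B (f v) (f w) :=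
  rfl

/-- The projection of bilinear forms onto the invariant ones, given by averaging over `G`. -/
noncomputable def bilinFormAverage [Fintype G] (ρ : Representation k G V) :
    LinearMap.BilinForm k V →ₗ[k] LinearMap.BilinForm k V :=
  (Fintype.card G : k)⁻¹ • ∑ g, bilinFormPullback (ρ g)

theorem bilinFormAverage_apply [Fintype G] (ρ : Representation k G V)
    (B : LinearMap.BilinForm k V) (v w : V) :
    bilinFormAverage ρ B v w = (Fintype.card G : k)⁻¹ * ∑ g, B (ρ g v) (ρ g w) := by
  simp [bilinFormAverage, LinearMap.sum_apply, bilinFormPullback_apply]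

theorem isProj_bilinFormAverage [Fintype G] [NeZero (Fintype.card G : k)]
    (ρ : Representation k G V) :
    LinearMap.IsProj (invariantForms ρ) (bilinFormAverage ρ) where
  map_mem B h v w := by
    simp only [bilinFormAverage_apply, ← Module.End.mul_apply, ← map_mul]
    exact congrArg _ (Fintype.sum_equiv (Equiv.mulRight h) _ _ fun _ ↦ rfl)
  map_id B hB := LinearMap.ext₂ fun v w ↦ by
    simp only [bilinFormAverage_apply, mem_invariantForms.1 hB, Finset.sum_const,
      Finset.card_univ, nsmul_eq_mul]
    exact inv_mul_cancel_left₀ (NeZero.ne _) _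

theorem trace_bilinFormAverage [FiniteDimensional k V] [Fintype G] [NeZero (Fintype.card G : k)]
    (ρ : Representation k G V) :
    LinearMap.trace k _ (bilinFormAverage ρ) = Module.finrank k (invariantForms ρ) := by
  have trace_eq_finrank {W : Type _} [AddCommGroup W] [Module k W] [FiniteDimensional k W]
      {p : Submodule k W} {f : W →ₗ[k] W} (hf : LinearMap.IsProj p f) :
      LinearMap.trace k W f = Module.finrank k p := hf.trace
  exact trace_eq_finrank (W := LinearMap.BilinForm k V) (isProj_bilinFormAverage ρ)

theorem trace_flipHom_comp_bilinFormPullback [FiniteDimensional k V] (f : Module.End k V) :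
    LinearMap.trace k _ (LinearMap.BilinForm.flipHom.toLinearMap ∘ₗ bilinFormPullback f) =
      LinearMap.trace k V (f * f) := by
  let b := Module.finBasis k V
  let β := (Matrix.stdBasis k _ _).map (LinearMap.BilinForm.toMatrix b).symm
  have β_apply (i j v w) : β (i, j) v w = b.repr v i * b.repr w j := by
    simp [β, Matrix.stdBasis_eq_single, Matrix.toBilin_apply, Matrix.single_apply, ite_and]
  have repr_β (B i j) : β.repr B (i, j) = B (b i) (b j) := by
    simp [β, Matrix.stdBasis, LinearMap.BilinForm.toMatrix_apply]
  have flip_apply (B v w) :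
      (LinearMap.BilinForm.flipHom.toLinearMap ∘ₗ bilinFormPullback f) B v w = B (f w) (f v) := rfl
  simp only [LinearMap.trace_eq_matrix_trace k β, LinearMap.trace_eq_matrix_trace k b,
    Matrix.trace, Fintype.sum_prod_type, Matrix.diag_apply, LinearMap.toMatrix_mul,
    Matrix.mul_apply, LinearMap.toMatrix_apply, repr_β, flip_apply, β_apply]

theorem trace_flipHom_comp_bilinFormAverage [FiniteDimensional k V] [Fintype G]
    (ρ : Representation k G V) :
    LinearMap.trace k _ (LinearMap.BilinForm.flipHom.toLinearMap ∘ₗ bilinFormAverage ρ) =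
      frobeniusSchur ρ := by
  have comp_eq : LinearMap.BilinForm.flipHom.toLinearMap ∘ₗ bilinFormAverage ρ =
      (Fintype.card G : k)⁻¹ •
        ∑ g, LinearMap.BilinForm.flipHom.toLinearMap ∘ₗ bilinFormPullback (ρ g) := by
    ext1 B
    simp only [bilinFormAverage, LinearMap.comp_apply, LinearMap.smul_apply, LinearMap.sum_apply,
      map_smul, map_sum]
  simp only [comp_eq, map_smul, map_sum, trace_flipHom_comp_bilinFormPullback, smul_eq_mul,
    frobeniusSchur, Representation.character, sq, map_mul]

theorem exists_isSymm_of_frobeniusSchur_eq_one [CharZero k] [FiniteDimensional k V] [Fintype G]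
    {ρ : Representation k G V} (h : frobeniusSchur ρ = 1) :
    ∃ B ∈ invariantForms ρ, B.IsSymm ∧ B ≠ 0 := by
  -- Otherwise `flip` is `-1` on the invariant forms, so the indicator is minus their dimension.
  have : NeZero (Fintype.card G : k) := ⟨Nat.cast_ne_zero.2 Fintype.card_ne_zero⟩
  by_contra! hcon
  have comp_add_eq_zero : LinearMap.BilinForm.flipHom.toLinearMap ∘ₗ bilinFormAverage ρ +
      bilinFormAverage ρ = 0 := by
    refine LinearMap.ext fun A ↦ hcon _ (fun g v w ↦ ?_) ⟨fun v w ↦ add_comm _ _⟩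
    have invariant := (isProj_bilinFormAverage ρ).map_mem A
    exact congrArg₂ (· + ·) (invariant g w v) (invariant g v w)
  have one_add_finrank_eq_zero : ((1 + Module.finrank k (invariantForms ρ) : ℕ) : k) = 0 := by
    rw [Nat.cast_add, Nat.cast_one, ← h, ← trace_flipHom_comp_bilinFormAverage,
      ← trace_bilinFormAverage, ← map_add, comp_add_eq_zero, map_zero]
  rw [Nat.cast_eq_zero, add_eq_zero] at one_add_finrank_eq_zero
  exact one_ne_zero one_add_finrank_eq_zero.1

theorem exists_eq_smul_of_isIrreducible {W : Type*} [AddCommGroup W] [Module k W] [IsAlgClosed k]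
    [FiniteDimensional k V] [FiniteDimensional k W] {ρ : Representation k G V}
    {σ : Representation k G W} (hρ : ρ.IsIrreducible)
    (hVW : Module.finrank k V = Module.finrank k W) {φ : ρ.IntertwiningMap σ} (hφ : φ ≠ 0)
    (ψ : ρ.IntertwiningMap σ) : ∃ c : k, ψ = c • φ := by
  have injective : Function.Injective φ :=
    (Representation.IsIrreducible.injective_or_eq_zero φ).resolve_right hφ
  have surjective : Function.Surjective φ :=
    (LinearMap.injective_iff_surjective_of_finrank_eq_finrank hVW (f := φ.toLinearMap)).1 injective
  let e := φ.ofBijective ⟨injective, surjective⟩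
  obtain ⟨c, hc⟩ :=
    Representation.IsIrreducible.algebraMap_intertwiningMap_bijective_of_isAlgClosed.2
      (e.symm.toIntertwiningMap.comp ψ)
  refine ⟨c, Representation.IntertwiningMap.ext (LinearMap.ext fun v ↦ ?_)⟩
  have smul_eq : c • v = e.symm (ψ v) := congr($hc v)
  calc ψ v = e (e.symm (ψ v)) := (e.apply_symm_apply _).symm
    _ = c • φ v := by rw [← smul_eq]; exact map_smul φ c v

/-- An invariant bilinear form, regarded as an intertwining map to the dual representation. -/
def invariantFormToDual {ρ : Representation k G V} (B : invariantForms ρ) :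
    ρ.IntertwiningMap ρ.dual where
  toLinearMap := B.1
  isIntertwining' g := LinearMap.ext₂ fun v w ↦ by
    have := B.2 g v (ρ g⁻¹ w)
    rwa [ρ.self_inv_apply] at this

theorem invariantForms_eq_span_singleton [IsAlgClosed k] [FiniteDimensional k V]
    {ρ : Representation k G V} (hρ : ρ.IsIrreducible) {B : LinearMap.BilinForm k V}
    (hB : B ∈ invariantForms ρ) (hB0 : B ≠ 0) : invariantForms ρ = Submodule.span k {B} := by
  refine le_antisymm (fun A hA ↦ Submodule.mem_span_singleton.2 ?_)
    ((Submodule.span_singleton_le_iff_mem _ _).2 hB)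
  obtain ⟨c, hc⟩ := exists_eq_smul_of_isIrreducible hρ Subspace.dual_finrank_eq.symm
    (φ := invariantFormToDual ⟨B, hB⟩)
    (fun h ↦ hB0 (congrArg Representation.IntertwiningMap.toLinearMap h))
    (invariantFormToDual ⟨A, hA⟩)
  exact ⟨c, (congrArg Representation.IntertwiningMap.toLinearMap hc).symm⟩

theorem frobeniusSchur_eq_one_of_isSymm [IsAlgClosed k] [FiniteDimensional k V]
    [Fintype G] [NeZero (Fintype.card G : k)] {ρ : Representation k G V} (hρ : ρ.IsIrreducible)
    {B : LinearMap.BilinForm k V} (hB : B ∈ invariantForms ρ) (hsymm : B.IsSymm) (hB0 : B ≠ 0) :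
    frobeniusSchur ρ = 1 := by
  have eq_span := invariantForms_eq_span_singleton hρ hB hB0
  have comp_eq : LinearMap.BilinForm.flipHom.toLinearMap ∘ₗ bilinFormAverage ρ =
      bilinFormAverage ρ := by
    ext1 A
    obtain ⟨c, smul_eq⟩ := Submodule.mem_span_singleton.1
      (eq_span ▸ (isProj_bilinFormAverage ρ).map_mem A)
    rw [LinearMap.comp_apply, ← smul_eq]
    exact LinearMap.ext₂ fun v w ↦ congrArg (c * ·) (hsymm.eq w v)
  rw [← trace_flipHom_comp_bilinFormAverage, comp_eq, trace_bilinFormAverage, eq_span,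
    finrank_span_singleton (V := LinearMap.BilinForm k V) hB0, Nat.cast_one]

end FrobeniusSchur

section InvariantInnerProduct

variable {𝕜 G V : Type*} [RCLike 𝕜] [Group G] [AddCommGroup V] [Module 𝕜 V]
  [FiniteDimensional 𝕜 V]

theorem exists_core_inner_map_map [Finite G] (ρ : Representation 𝕜 G V) :
    ∃ c : InnerProductSpace.Core 𝕜 V, ∀ g v w, c.inner (ρ g v) (ρ g w) = c.inner v w := by
  have := Fintype.ofFinite G
  let e : V ≃ₗ[𝕜] EuclideanSpace 𝕜 (Fin (Module.finrank 𝕜 V)) :=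
    (Module.finBasis 𝕜 V).equivFun ≪≫ₗ (WithLp.linearEquiv 2 𝕜 _).symm
  refine ⟨{
    inner v w := ∑ g, inner 𝕜 (e (ρ g v)) (e (ρ g w))
    conj_inner_symm v w := by simp only [map_sum, inner_conj_symm]
    re_inner_nonneg v := by
      rw [map_sum]
      exact Finset.sum_nonneg fun g _ ↦ inner_self_nonneg
    add_left u v w := by simp only [map_add, inner_add_left, Finset.sum_add_distrib]
    smul_left v w a := by simp only [map_smul, inner_smul_left, Finset.mul_sum]
    definite v hv := ?_ }, fun g v w ↦ ?_⟩
  · have sum_re_eq_zero : ∑ g, RCLike.re (inner 𝕜 (e (ρ g v)) (e (ρ g v))) = 0 := by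
      rw [← map_sum, hv, map_zero]
    have re_eq_zero := (Finset.sum_eq_zero_iff_of_nonneg fun g _ ↦ inner_self_nonneg).1
      sum_re_eq_zero 1 (Finset.mem_univ 1)
    simpa using re_inner_self_nonpos.1 re_eq_zero.le
  · change ∑ h, inner 𝕜 (e (ρ h (ρ g v))) (e (ρ h (ρ g w))) =
      ∑ h, inner 𝕜 (e (ρ h v)) (e (ρ h w))
    simp only [← Module.End.mul_apply, ← map_mul]
    exact Fintype.sum_equiv (Equiv.mulRight g) _ _ fun _ ↦ rfl

theorem exists_unitaryGroup_ker_eq_of_inner_map_map {E ι : Type*} [NormedAddCommGroup E]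
    [InnerProductSpace 𝕜 E] [FiniteDimensional 𝕜 E] [Fintype ι] [DecidableEq ι]
    (b : OrthonormalBasis ι 𝕜 E) (ρ : Representation 𝕜 G E)
    (hρ : ∀ g v w, inner 𝕜 (ρ g v) (ρ g w) = inner 𝕜 v w) :
    ∃ ψ : G →* Matrix.unitaryGroup ι 𝕜, ψ.ker = MonoidHom.ker ρ := by
  let Φ := LinearMap.toMatrixOrthonormal b
  have adjoint_mul (g : G) : LinearMap.adjoint (ρ g) * ρ g = 1 :=
    LinearMap.ext fun v ↦ ext_inner_right 𝕜 fun w ↦ by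
      rw [Module.End.mul_apply, LinearMap.adjoint_inner_left, hρ, Module.End.one_apply]
  have mem_unitary (g : G) : Φ (ρ g) ∈ Matrix.unitaryGroup ι 𝕜 := by
    rw [Matrix.mem_unitaryGroup_iff', ← map_star, ← map_mul, LinearMap.star_eq_adjoint,
      adjoint_mul, map_one]
  let Φρ : G →* Matrix ι ι 𝕜 := (MonoidHomClass.toMonoidHom Φ).comp ρ
  refine ⟨Φρ.codRestrict _ mem_unitary, ?_⟩
  ext g
  rw [MonoidHom.mem_ker, MonoidHom.mem_ker, ← map_eq_one_iff Φ Φ.injective, Subtype.ext_iff]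
  rfl

theorem exists_unitaryGroup_ker_eq [Finite G] (ρ : Representation 𝕜 G V) :
    ∃ ψ : G →* Matrix.unitaryGroup (Fin (Module.finrank 𝕜 V)) 𝕜, ψ.ker = MonoidHom.ker ρ := by
  obtain ⟨c, hc⟩ := exists_core_inner_map_map ρ
  let := c.toNormedAddCommGroup
  let := InnerProductSpace.ofCore c.toCore
  exact exists_unitaryGroup_ker_eq_of_inner_map_map (stdOrthonormalBasis 𝕜 V) ρ hc

theorem exists_unitaryGroup_ker_eq_of_finrank_le [Finite G] (ρ : Representation 𝕜 G V) {d : ℕ}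
    (hd : Module.finrank 𝕜 V ≤ d) :
    ∃ ψ : G →* Matrix.unitaryGroup (Fin d) 𝕜, ψ.ker = MonoidHom.ker ρ := by
  let τ : Representation 𝕜 G (Fin (d - Module.finrank 𝕜 V) → 𝕜) := 1
  have finrank_prod : Module.finrank 𝕜 (V × (Fin (d - Module.finrank 𝕜 V) → 𝕜)) = d := by
    rw [Module.finrank_prod, Module.finrank_fin_fun, Nat.add_sub_cancel' hd]
  obtain ⟨ψ, hψ⟩ := finrank_prod ▸ exists_unitaryGroup_ker_eq (ρ.prod τ)
  refine ⟨ψ, hψ.trans ?_⟩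
  ext g
  simp only [MonoidHom.mem_ker, LinearMap.ext_iff]
  constructor
  · intro h v
    exact congrArg Prod.fst (h (v, 0))
  · intro h v
    exact Prod.ext (h v.1) rfl

theorem sum_norm_map_sub_self_sq {E ι : Type*} [NormedAddCommGroup E] [InnerProductSpace 𝕜 E]
    [Fintype ι] (b : OrthonormalBasis ι 𝕜 E) (T : E →ₗᵢ[𝕜] E) :
    ∑ i, ‖T (b i) - b i‖ ^ 2 =
      2 * (Fintype.card ι - RCLike.re (LinearMap.trace 𝕜 E T.toLinearMap)) := by
  have norm_sq (i : ι) : ‖T (b i) - b i‖ ^ 2 = 2 * (1 - RCLike.re (inner 𝕜 (b i) (T (b i)))) := by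
    rw [norm_sub_sq (𝕜 := 𝕜), T.norm_map, b.norm_eq_one, inner_re_symm]
    ring
  simp only [norm_sq, ← Finset.mul_sum, Finset.sum_sub_distrib, Finset.sum_const,
    Finset.card_univ, nsmul_one, LinearMap.trace_eq_sum_inner _ b, map_sum,
    LinearIsometry.coe_toLinearMap]

theorem apply_eq_one_of_character_eq [Finite G] (ρ : Representation 𝕜 G V) {g : G}
    (h : ρ.character g = ρ.character 1) : ρ g = 1 := by
  obtain ⟨c, hc⟩ := exists_core_inner_map_map ρ
  let := c.toNormedAddCommGroup
  let := InnerProductSpace.ofCore c.toCore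
  let T : V →ₗᵢ[𝕜] V := (ρ g).isometryOfInner (hc g)
  let b := stdOrthonormalBasis 𝕜 V
  have sum_eq_zero : ∑ i, ‖T (b i) - b i‖ ^ 2 = 0 := by
    have trace_eq : LinearMap.trace 𝕜 V T.toLinearMap = Module.finrank 𝕜 V :=
      h.trans (Representation.char_one ρ)
    rw [sum_norm_map_sub_self_sq, trace_eq, Fintype.card_fin, RCLike.natCast_re, sub_self,
      mul_zero]
  refine b.toBasis.ext fun i ↦ ?_
  have norm_eq_zero := (Finset.sum_eq_zero_iff_of_nonneg fun i _ ↦ sq_nonneg _).1 sum_eq_zero i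
    (Finset.mem_univ i)
  simpa [T, sub_eq_zero] using norm_eq_zero

end InvariantInnerProduct

section RealStructure

variable {G : Type*} [Group G]

/-- The representation over `k` underlying a representation over an extension `K` of `k`. -/
def restrictScalarsRep (k : Type*) {K V : Type*} [Semiring k] [Semiring K] [AddCommMonoid V]
    [Module k V] [Module K V] [LinearMap.CompatibleSMul V V k K] (ρ : Representation K G V) :
    Representation k G V where
  toFun g := (ρ g).restrictScalars k
  map_one' := by rw [map_one]; rfl
  map_mul' g h := by rw [map_mul]; rfl

theorem exists_hasEigenvalue_ne_zero_of_isSymmetric {𝕜 E : Type*} [RCLike 𝕜] [NormedAddCommGroup E]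
    [InnerProductSpace 𝕜 E] [FiniteDimensional 𝕜 E] {T : E →ₗ[𝕜] E} (hT : T.IsSymmetric)
    (hT0 : T ≠ 0) : ∃ μ ≠ 0, Module.End.HasEigenvalue T μ := by
  by_contra! h
  have iSup_le : ⨆ μ, Module.End.eigenspace T μ ≤ LinearMap.ker T := by
    refine iSup_le fun μ ↦ ?_
    rcases eq_or_ne μ 0 with rfl | hμ
    · exact (Module.End.eigenspace_zero T).le
    · rw [not_not.1 (mt Module.End.hasEigenvalue_iff.2 (h μ hμ))]
      exact bot_le
  have iSup_eq_top :=
    Submodule.orthogonal_eq_bot_iff.1 hT.orthogonalComplement_iSup_eigenspaces_eq_bot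
  exact hT0 (LinearMap.ker_eq_top.1 (top_le_iff.1 (iSup_eq_top ▸ iSup_le)))

theorem two_mul_finrank_eigenspace_le {k V : Type*} [Field k] [NeZero (2 : k)] [AddCommGroup V]
    [Module k V] [FiniteDimensional k V] {T : Module.End k V} {J : V ≃ₗ[k] V}
    (hJ : ∀ v, T (J v) = -J (T v)) {μ : k} (hμ : μ ≠ 0) :
    2 * Module.finrank k (Module.End.eigenspace T μ) ≤ Module.finrank k V := by
  have map_le : (Module.End.eigenspace T μ).map (J : V →ₗ[k] V) ≤
      Module.End.eigenspace T (-μ) := by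
    rintro _ ⟨v, hv, rfl⟩
    rw [SetLike.mem_coe, Module.End.mem_eigenspace_iff] at hv
    rw [Module.End.mem_eigenspace_iff, LinearEquiv.coe_coe, hJ, hv, map_smul, neg_smul]
  have ne_neg : μ ≠ -μ := fun h ↦ hμ <| by
    have : 2 * μ = 0 := by linear_combination h
    exact (mul_eq_zero.1 this).resolve_left (NeZero.ne 2)
  have disjoint : Disjoint (Module.End.eigenspace T μ)
      ((Module.End.eigenspace T μ).map (J : V →ₗ[k] V)) :=
    (Module.End.disjoint_genEigenspace T ne_neg 1 1).mono_right map_le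
  have := Submodule.finrank_add_finrank_le_of_disjoint disjoint
  rwa [LinearEquiv.finrank_map_eq, ← two_mul] at this

section RieszOperator

variable {E : Type*} [NormedAddCommGroup E] [InnerProductSpace ℂ E] [FiniteDimensional ℂ E]

/-- The conjugate-linear operator `A` representing a complex bilinear form `B` through
`⟪A v, w⟫ = B v w`, regarded as an `ℝ`-linear map. -/
noncomputable def rieszOperator (B : LinearMap.BilinForm ℂ E) : E →ₗ[ℝ] E :=
  letI := FiniteDimensional.complete ℂ E
  { toFun v := (InnerProductSpace.toDual ℂ E).symm (LinearMap.toContinuousLinearMap (B v))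
    map_add' v w := by simp only [map_add]
    map_smul' r v := by
      simp only [← Complex.coe_smul, map_smul, map_smulₛₗ, Complex.conj_ofReal, RingHom.id_apply] }

theorem inner_rieszOperator (B : LinearMap.BilinForm ℂ E) (v w : E) :
    inner ℂ (rieszOperator B v) w = B v w :=
  letI := FiniteDimensional.complete ℂ E
  InnerProductSpace.toDual_symm_apply

theorem rieszOperator_I_smul (B : LinearMap.BilinForm ℂ E) (v : E) :
    rieszOperator B (Complex.I • v) = -(Complex.I • rieszOperator B v) :=
  ext_inner_right ℂ fun w ↦ by
    simp only [inner_rieszOperator, inner_neg_left, inner_smul_left, map_smul,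
      LinearMap.smul_apply, Complex.conj_I, smul_eq_mul, neg_mul, neg_neg]

theorem re_inner_rieszOperator_comm {B : LinearMap.BilinForm ℂ E} (hB : B.IsSymm) (v w : E) :
    (inner ℂ (rieszOperator B v) w).re = (inner ℂ v (rieszOperator B w)).re := by
  rw [inner_rieszOperator, hB.eq, ← inner_rieszOperator]
  exact inner_re_symm (𝕜 := ℂ) _ _

theorem rieszOperator_ne_zero {B : LinearMap.BilinForm ℂ E} (hB : B ≠ 0) : rieszOperator B ≠ 0 :=
  fun h ↦ hB <| LinearMap.ext₂ fun v w ↦ by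
    rw [← inner_rieszOperator, h, LinearMap.zero_apply, inner_zero_left, LinearMap.zero_apply,
      LinearMap.zero_apply]

theorem rieszOperator_apply_map {B : LinearMap.BilinForm ℂ E} {ρ : Representation ℂ G E}
    (hρ : ∀ g v w, inner ℂ (ρ g v) (ρ g w) = inner ℂ v w)
    (hB : B ∈ invariantForms ρ) (g : G) (v : E) :
    rieszOperator B (ρ g v) = ρ g (rieszOperator B v) :=
  ext_inner_right ℂ fun w ↦ by
    have apply_inv : ρ g (ρ g⁻¹ w) = w := ρ.self_inv_apply g w
    rw [← apply_inv, inner_rieszOperator, mem_invariantForms.1 hB, hρ, inner_rieszOperator]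

theorem exists_hasEigenvalue_rieszOperator_ne_zero {B : LinearMap.BilinForm ℂ E} (hB : B.IsSymm)
    (hB0 : B ≠ 0) : ∃ μ ≠ 0, Module.End.HasEigenvalue (rieszOperator B) μ := by
  let := InnerProductSpace.complexToReal (G := E)
  exact exists_hasEigenvalue_ne_zero_of_isSymmetric (𝕜 := ℝ) (re_inner_rieszOperator_comm hB)
    (rieszOperator_ne_zero hB0)

theorem finrank_eigenspace_rieszOperator_le (B : LinearMap.BilinForm ℂ E) {μ : ℝ} (hμ : μ ≠ 0) :
    Module.finrank ℝ (Module.End.eigenspace (rieszOperator B) μ) ≤ Module.finrank ℂ E := by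
  let J : E ≃ₗ[ℝ] E := (LinearEquiv.smulOfNeZero ℂ E Complex.I Complex.I_ne_zero).restrictScalars ℝ
  have two_mul_le := two_mul_finrank_eigenspace_le (J := J) (rieszOperator_I_smul B) hμ
  rw [finrank_real_of_complex] at two_mul_le
  exact Nat.le_of_mul_le_mul_left two_mul_le two_pos

theorem exists_real_subrepresentation_of_inner_map_map {B : LinearMap.BilinForm ℂ E}
    {ρ : Representation ℂ G E} (hρ : ∀ g v w, inner ℂ (ρ g v) (ρ g w) = inner ℂ v w)
    (hB : B ∈ invariantForms ρ) (hsymm : B.IsSymm) (hB0 : B ≠ 0) :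
    ∃ q : Subrepresentation (restrictScalarsRep ℝ ρ),
      q ≠ ⊥ ∧ Module.finrank ℝ q.toSubmodule ≤ Module.finrank ℂ E := by
  obtain ⟨μ, hμ0, hμ⟩ := exists_hasEigenvalue_rieszOperator_ne_zero hsymm hB0
  refine ⟨⟨Module.End.eigenspace (rieszOperator B) μ, fun g v hv ↦ ?_⟩, fun h ↦
    hμ (congrArg Subrepresentation.toSubmodule h), finrank_eigenspace_rieszOperator_le B hμ0⟩
  rw [Module.End.mem_eigenspace_iff] at hv ⊢
  exact (rieszOperator_apply_map hρ hB g v).trans <|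
    (congrArg (ρ g) hv).trans (((ρ g).restrictScalars ℝ).map_smul μ v)

end RieszOperator

theorem exists_real_subrepresentation_of_isSymm [Finite G] {V : Type*} [AddCommGroup V]
    [Module ℂ V] [FiniteDimensional ℂ V] {ρ : Representation ℂ G V}
    {B : LinearMap.BilinForm ℂ V} (hB : B ∈ invariantForms ρ) (hsymm : B.IsSymm) (hB0 : B ≠ 0) :
    ∃ q : Subrepresentation (restrictScalarsRep ℝ ρ),
      q ≠ ⊥ ∧ Module.finrank ℝ q.toSubmodule ≤ Module.finrank ℂ V := by
  obtain ⟨c, hc⟩ := exists_core_inner_map_map ρ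
  let := c.toNormedAddCommGroup
  let := InnerProductSpace.ofCore c.toCore
  exact exists_real_subrepresentation_of_inner_map_map hc hB hsymm hB0

end RealStructure

section Irreducible

variable {k G V : Type*} [Field k] [Group G] [AddCommGroup V] [Module k V]

/-- The vectors fixed by a normal subgroup, as a subrepresentation. -/
noncomputable def fixedSubrepresentation (ρ : Representation k G V) (N : Subgroup G) [N.Normal] :
    Subrepresentation ρ where
  toSubmodule := Representation.invariants (ρ.comp N.subtype)
  apply_mem_toSubmodule g _ hv := ρ.le_comap_invariants N g hv

theorem le_ker_of_fixedSubrepresentation_eq_top {ρ : Representation k G V} {N : Subgroup G}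
    [N.Normal] (h : fixedSubrepresentation ρ N = ⊤) : N ≤ MonoidHom.ker ρ := fun n hn ↦
  LinearMap.ext fun v ↦ (h ▸ trivial : v ∈ fixedSubrepresentation ρ N) ⟨n, hn⟩

theorem ker_toRepresentation_restrictScalarsRep_le {K : Type*} [Field K] [Module K V]
    [LinearMap.CompatibleSMul V V k K] {ρ : Representation K G V} (hρ : ρ.IsIrreducible)
    {q : Subrepresentation (restrictScalarsRep k ρ)} (hq : q ≠ ⊥) :
    MonoidHom.ker q.toRepresentation ≤ MonoidHom.ker ρ := by
  refine le_ker_of_fixedSubrepresentation_eq_top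
    ((hρ.eq_bot_or_eq_top _).resolve_left fun fixed_eq_bot ↦ hq ?_)
  refine le_bot_iff.1 fun v hv ↦ ?_
  have fixed : v ∈ fixedSubrepresentation ρ (MonoidHom.ker q.toRepresentation) :=
    fun n ↦ congrArg Subtype.val (LinearMap.congr_fun n.2 ⟨v, hv⟩)
  rw [fixed_eq_bot] at fixed
  exact fixed

theorem isIrreducible_toRepresentation {ρ : Representation k G V} {q : Subrepresentation ρ}
    (hq : IsAtom q) : q.toRepresentation.IsIrreducible := by
  let lift (p : Subrepresentation q.toRepresentation) : Subrepresentation ρ :=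
    { toSubmodule := p.toSubmodule.map q.toSubmodule.subtype
      apply_mem_toSubmodule := by
        rintro g _ ⟨v, hv, rfl⟩
        exact ⟨_, p.apply_mem_toSubmodule g hv, rfl⟩ }
  have lift_le (p) : lift p ≤ q := by
    rintro _ ⟨v, -, rfl⟩
    exact v.2
  have lift_injective : Function.Injective lift := fun p p' h ↦
    Subrepresentation.toSubmodule_injective <|
      Submodule.map_injective_of_injective q.toSubmodule.injective_subtype
        (congrArg Subrepresentation.toSubmodule h)
  have lift_bot : lift ⊥ = ⊥ := Subrepresentation.toSubmodule_injective (Submodule.map_bot _)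
  have lift_top : lift ⊤ = q :=
    Subrepresentation.toSubmodule_injective (Submodule.map_subtype_top _)
  have : Nontrivial (Subrepresentation q.toRepresentation) :=
    ⟨⊥, ⊤, fun h ↦ hq.1 (lift_top.symm.trans ((congrArg lift h.symm).trans lift_bot))⟩
  exact ⟨fun p ↦ (hq.le_iff.1 (lift_le p)).imp (fun h ↦ lift_injective (h.trans lift_bot.symm))
    fun h ↦ lift_injective (h.trans lift_top.symm)⟩

theorem iInf_ker_toRepresentation_le_ker [Finite G] [NeZero (Nat.card G : k)]
    (ρ : Representation k G V) :
    ⨅ q : {q : Subrepresentation ρ // q.toRepresentation.IsIrreducible},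
      MonoidHom.ker q.1.toRepresentation ≤ MonoidHom.ker ρ := by
  have : (⨅ q : {q : Subrepresentation ρ // q.toRepresentation.IsIrreducible},
      MonoidHom.ker q.1.toRepresentation).Normal :=
    Subgroup.normal_iInf_normal fun _ ↦ inferInstance
  let e := Subrepresentation.subrepresentationSubmoduleOrderIso (ρ := ρ)
  refine le_ker_of_fixedSubrepresentation_eq_top ((map_eq_top_iff e).1 (top_le_iff.1 ?_))
  rw [← sSup_atoms_eq_top, sSup_le_iff]
  refine fun m hm ↦ (OrderIso.symm_apply_le e).1 fun v hv n ↦ ?_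
  have apply_eq_one := Subgroup.mem_iInf.1 n.2
    ⟨e.symm m, isIrreducible_toRepresentation ((OrderIso.isAtom_iff e.symm m).2 hm)⟩
  exact congrArg Subtype.val (LinearMap.congr_fun apply_eq_one ⟨v, hv⟩)

end Irreducible

section RealDegree

universe u

open CategoryTheory

theorem isIrreducible_of_simple {G k : Type*} [Group G] [Field k] (V : FDRep k G) [Simple V] :
    Representation.IsIrreducible V.ρ := by
  have nontrivial_space : Nontrivial V := by
    refine not_subsingleton_iff_nontrivial.1 fun h ↦ Simple.not_isZero V ?_
    rw [Limits.IsZero.iff_id_eq_zero]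
    ext v
    exact Subsingleton.elim _ _
  have : Nontrivial (Subrepresentation V.ρ) :=
    ⟨⊥, ⊤, fun h ↦ bot_ne_top (congrArg Subrepresentation.toSubmodule h)⟩
  refine ⟨fun p ↦ ?_⟩
  let i : FDRep.of p.toRepresentation ⟶ V :=
    ⟨FGModuleCat.ofHom p.toSubmodule.subtype, fun g ↦ by ext v; rfl⟩
  have : Mono i := ConcreteCategory.mono_of_injective i p.toSubmodule.injective_subtype
  refine (eq_or_ne i 0).imp (fun hi ↦ ?_) fun hi ↦ ?_
  · refine le_bot_iff.1 fun v hv ↦ ?_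
    exact congrArg (fun f : FDRep.of p.toRepresentation ⟶ V ↦ f.hom.hom.hom ⟨v, hv⟩) hi
  · have := isIso_of_mono_of_nonzero hi
    refine top_le_iff.1 fun v _ ↦ ?_
    have inv_apply : i.hom.hom.hom ((inv i).hom.hom.hom v) = v :=
      congrArg (fun f : V ⟶ V ↦ f.hom.hom.hom v) (IsIso.inv_hom_id i)
    rw [← inv_apply]
    exact Subtype.property (p := (· ∈ p.toSubmodule)) ((inv i).hom.hom.hom v)

theorem simple_of_isIrreducible {k G V : Type u} [Field k] [IsAlgClosed k] [CharZero k] [Group G]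
    [Finite G] [AddCommGroup V] [Module k V] [FiniteDimensional k V] {ρ : Representation k G V}
    (hρ : ρ.IsIrreducible) : Simple (FDRep.of ρ) := by
  have := Fintype.ofFinite G
  have : Invertible (Nat.card G : k) := invertibleOfNonzero (by simp)
  have char_norm := ρ.card_inv_mul_sum_char_mul_char_eq_finrank ρ
  rw [Representation.IsIrreducible.finrank_intertwiningMap_self, Nat.cast_one,
    inv_mul_eq_one₀ (by simp)] at char_norm
  exact (FDRep.simple_iff_char_is_norm_one _).2 char_norm.symm

variable {G : Type} [Group G] [Fintype G]

theorem realDeg_eq_of_frobeniusSchur_eq_one {V : FDRep ℂ G} (h : frobeniusSchur V.ρ = 1) :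
    realDeg V = Module.finrank ℂ V :=
  if_pos h

theorem realDeg_eq_of_frobeniusSchur_ne_one {V : FDRep ℂ G} (h : frobeniusSchur V.ρ ≠ 1) :
    realDeg V = 2 * Module.finrank ℂ V :=
  if_neg h

theorem realDeg_le_two_mul_finrank (V : FDRep ℂ G) : realDeg V ≤ 2 * Module.finrank ℂ V := by
  unfold realDeg
  split_ifs <;> lia

theorem exists_real_subrepresentation_finrank_le_realDeg (V : FDRep ℂ G) [Simple V] :
    ∃ q : Subrepresentation (restrictScalarsRep ℝ V.ρ), q ≠ ⊥ ∧
      Module.finrank ℝ q.toSubmodule ≤ realDeg V := by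
  by_cases h : frobeniusSchur V.ρ = 1
  · obtain ⟨B, hB, hsymm, hB0⟩ := exists_isSymm_of_frobeniusSchur_eq_one h
    rw [realDeg_eq_of_frobeniusSchur_eq_one h]
    exact exists_real_subrepresentation_of_isSymm hB hsymm hB0
  · have := isIrreducible_of_simple V
    refine ⟨⊤, fun top_eq_bot ↦ ?_, ?_⟩
    · refine bot_ne_top (α := Subrepresentation V.ρ) (le_bot_iff.1 fun v _ ↦ ?_).symm
      exact (top_eq_bot ▸ trivial : v ∈ (⊥ : Subrepresentation (restrictScalarsRep ℝ V.ρ)))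
    rw [realDeg_eq_of_frobeniusSchur_ne_one h, ← finrank_real_of_complex]
    exact Submodule.finrank_le _

theorem realDeg_toRepresentation_le_finrank {V : Type} [AddCommGroup V] [Module ℂ V]
    [FiniteDimensional ℂ V] {ρ : Representation ℂ G V} {B : LinearMap.BilinForm ℂ V}
    (hB : B ∈ invariantForms ρ) (hsymm : B.IsSymm) (hnondeg : B.Nondegenerate)
    {q : Subrepresentation ρ} (hq : q.toRepresentation.IsIrreducible) :
    realDeg (FDRep.of q.toRepresentation) ≤ Module.finrank ℂ V := by
  have finrank_le := Submodule.finrank_le q.toSubmodule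
  by_cases isotropic : B.restrict q.toSubmodule = 0
  · have le_orthogonal : q.toSubmodule ≤ B.orthogonal q.toSubmodule := fun v hv w hw ↦
      LinearMap.congr_fun₂ isotropic ⟨w, hw⟩ ⟨v, hv⟩
    have finrank_le_sub := Submodule.finrank_mono le_orthogonal
    rw [LinearMap.BilinForm.finrank_orthogonal hnondeg] at finrank_le_sub
    refine (realDeg_le_two_mul_finrank _).trans ?_
    change 2 * Module.finrank ℂ q.toSubmodule ≤ _
    lia
  · have : NeZero (Fintype.card G : ℂ) := ⟨Nat.cast_ne_zero.2 Fintype.card_ne_zero⟩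
    have indicator_eq_one : frobeniusSchur q.toRepresentation = 1 :=
      frobeniusSchur_eq_one_of_isSymm (B := B.restrict q.toSubmodule) hq
        (fun g v w ↦ hB g v w) (hsymm.restrict _) isotropic
    exact (realDeg_eq_of_frobeniusSchur_eq_one (V := FDRep.of q.toRepresentation)
      indicator_eq_one).trans_le finrank_le

end RealDegree

section Complexification

variable {G ι : Type*} [Group G] [Fintype ι] [DecidableEq ι]

/-- The complexification of a real orthogonal representation. -/
noncomputable def complexification (ψ : G →* Matrix.orthogonalGroup ι ℝ) :
    Representation ℂ G (ι → ℂ) :=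
  (Matrix.toLinAlgEquiv' : _ ≃ₐ[ℂ] _).toMonoidHom.comp
    (Complex.ofRealHom.mapMatrix.toMonoidHom.comp ((Matrix.orthogonalGroup ι ℝ).subtype.comp ψ))

theorem ker_complexification (ψ : G →* Matrix.orthogonalGroup ι ℝ) :
    MonoidHom.ker (complexification ψ) = ψ.ker := by
  have injective : Function.Injective fun A : Matrix.orthogonalGroup ι ℝ ↦
      Matrix.toLinAlgEquiv' (R := ℂ) (A.1.map Complex.ofReal) :=
    Matrix.toLinAlgEquiv'.injective.comp
      ((Matrix.map_injective Complex.ofReal_injective).comp Subtype.val_injective)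
  ext g
  exact injective.eq_iff' (by simp)

theorem toBilin'_one_mem_invariantForms_complexification (ψ : G →* Matrix.orthogonalGroup ι ℝ) :
    Matrix.toBilin' 1 ∈ invariantForms (complexification ψ) := by
  intro g v w
  let A := (ψ g).1.map Complex.ofReal
  have transpose_mul_self : A.transpose * A = 1 := by
    have := congrArg Complex.ofRealHom.mapMatrix ((Matrix.mem_orthogonalGroup_iff' ι ℝ).1 (ψ g).2)
    rwa [map_mul, map_one] at this
  change (Matrix.toBilin' 1).comp (Matrix.toLin' A) (Matrix.toLin' A) v w = _
  rw [Matrix.toBilin'_comp, Matrix.mul_one, transpose_mul_self]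

theorem realDeg_le_card_of_isIrreducible {G ι : Type} [Group G] [Fintype G] [Fintype ι]
    [DecidableEq ι] {ψ : G →* Matrix.orthogonalGroup ι ℝ}
    {q : Subrepresentation (complexification ψ)} (hq : q.toRepresentation.IsIrreducible) :
    realDeg (FDRep.of q.toRepresentation) ≤ Fintype.card ι := by
  rw [← Module.finrank_fintype_fun_eq_card ℂ]
  refine realDeg_toRepresentation_le_finrank
    (toBilin'_one_mem_invariantForms_complexification ψ) ?_ ?_ hq
  · exact ⟨fun v w ↦ by simp [Matrix.toBilin'_apply', dotProduct_comm]⟩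
  · exact Matrix.Nondegenerate.toBilin' (Matrix.nondegenerate_of_det_ne_zero (by simp))

end Complexification

theorem stmt14 (G : Type) [Group G] [Fintype G] (d : ℕ) (hd : 1 ≤ d) :
    ((⨅ ψ : G →* Matrix.orthogonalGroup (Fin d) ℝ, ψ.ker : Subgroup G) : Set G) =
      ⋂ V ∈ {V : FDRep ℂ G | CategoryTheory.Simple V ∧ realDeg V ≤ d},
        {g : G | V.character g = V.character 1} := by
  ext g
  simp only [SetLike.mem_coe, Subgroup.mem_iInf, Set.mem_iInter]
  constructor
  · rintro hg V ⟨hV, hdeg⟩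
    obtain ⟨q, hq, finrank_le⟩ := exists_real_subrepresentation_finrank_le_realDeg V
    obtain ⟨ψ, hψ⟩ := exists_unitaryGroup_ker_eq_of_finrank_le q.toRepresentation
      (finrank_le.trans hdeg)
    have mem_ker : g ∈ MonoidHom.ker V.ρ :=
      ker_toRepresentation_restrictScalarsRep_le (isIrreducible_of_simple V) hq (hψ ▸ hg ψ)
    exact congrArg (LinearMap.trace ℂ V) (mem_ker.trans (map_one V.ρ).symm)
  · intro hg ψ
    have : NeZero (Nat.card G : ℂ) := ⟨by simp⟩
    rw [← ker_complexification]
    refine iInf_ker_toRepresentation_le_ker _ (Subgroup.mem_iInf.2 fun ⟨q, hq⟩ ↦ ?_)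
    have realDeg_le := realDeg_le_card_of_isIrreducible hq
    rw [Fintype.card_fin] at realDeg_le
    exact apply_eq_one_of_character_eq _ (hg _ ⟨simple_of_isIrreducible hq, realDeg_le⟩)
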